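/- If b ∈ P and J_1, J_2 ⊆ {1,…,d} are subsets of equal cardinality with b·η_{J_1} = η_{J_2} as simplices of BT, then J_1 = J_2 and b ∈ P_0Z. In particular, for distinct subsets J ⊆ {1,…,d} the simplices η_J lie in distinct P-orbits, and the stabilizer of η_J in P is contained in P_0Z. -/

import Mathlib

noncomputable section

open scoped Classical Pointwise

variable (p : ℕ) [Fact (Nat.Prime p)] (d : ℕ)

/-- The vector space `ℚ_p^{d+1}`. -/
abbrev Vsp := Fin (d + 1) → ℚ_[p]

/-- The general linear group `GL_{d+1}(ℚ_p)`. -/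
abbrev GL' := (Matrix (Fin (d + 1)) (Fin (d + 1)) ℚ_[p])ˣ

/-- A `ℤ_p`-lattice in `ℚ_p^{d+1}`: a finitely generated `ℤ_p`-submodule which spans
`ℚ_p^{d+1}` over `ℚ_p`. -/
def IsLattice (L : Submodule ℤ_[p] (Vsp p d)) : Prop :=
  L.FG ∧ Submodule.span ℚ_[p] (L : Set (Vsp p d)) = ⊤

/-- The type of lattices. -/
def LatZ := {L : Submodule ℤ_[p] (Vsp p d) // IsLattice p d L}

/-- Scalar multiplication by `c ∈ ℚ_p` as a `ℤ_p`-linear endomorphism of `ℚ_p^{d+1}`. -/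
def scalarMap (c : ℚ_[p]) : Vsp p d →ₗ[ℤ_[p]] Vsp p d where
  toFun v := c • v
  map_add' := smul_add c
  map_smul' a v := (smul_comm a c v).symm

lemma scalarMap_one : scalarMap p d 1 = LinearMap.id := by
  ext v
  simp [scalarMap]

lemma scalarMap_comp (c c' : ℚ_[p]) :
    (scalarMap p d c).comp (scalarMap p d c') = scalarMap p d (c * c') := by
  ext v
  simp [scalarMap, mul_smul]

/-- Homothety equivalence of lattices. -/
def latSetoid : Setoid (LatZ p d) where
  r L L' := ∃ c : ℚ_[p]ˣ, Submodule.map (scalarMap p d (c : ℚ_[p])) L.1 = L'.1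
  iseqv := by
    constructor
    · intro L
      exact ⟨1, by rw [Units.val_one, scalarMap_one, Submodule.map_id]⟩
    · rintro L L' ⟨c, hc⟩
      refine ⟨c⁻¹, ?_⟩
      rw [← hc, ← Submodule.map_comp, scalarMap_comp,
        show ((c⁻¹ : ℚ_[p]ˣ) : ℚ_[p]) * (c : ℚ_[p]) = 1 by
          rw [← Units.val_mul, inv_mul_cancel, Units.val_one],
        scalarMap_one, Submodule.map_id]
    · rintro L L' L'' ⟨c, hc⟩ ⟨c', hc'⟩
      refine ⟨c' * c, ?_⟩
      rw [← hc', ← hc, ← Submodule.map_comp, scalarMap_comp, ← Units.val_mul]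

/-- The set of vertices of the Bruhat–Tits building: homothety classes of lattices. -/
def Vtx := Quotient (latSetoid p d)

/-- The action of `g ∈ GL_{d+1}(ℚ_p)` on `ℚ_p^{d+1}`, as a `ℤ_p`-linear map. -/
def glMap (g : GL' p d) : Vsp p d →ₗ[ℤ_[p]] Vsp p d where
  toFun v := (g : Matrix (Fin (d + 1)) (Fin (d + 1)) ℚ_[p]).mulVec v
  map_add' v w := Matrix.mulVec_add _ v w
  map_smul' a v := by
    have h1 : a • v = (a : ℚ_[p]) • v := (algebraMap_smul ℚ_[p] a v).symm
    have h2 : a • (g : Matrix (Fin (d + 1)) (Fin (d + 1)) ℚ_[p]).mulVec v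
        = (a : ℚ_[p]) • (g : Matrix (Fin (d + 1)) (Fin (d + 1)) ℚ_[p]).mulVec v :=
      (algebraMap_smul ℚ_[p] a _).symm
    simp only [RingHom.id_apply, h1, h2, Matrix.mulVec_smul]

lemma glMap_surjective (g : GL' p d) : Function.Surjective (glMap p d g) := by
  intro w
  refine ⟨(g⁻¹ : GL' p d).val.mulVec w, ?_⟩
  show (g : Matrix (Fin (d + 1)) (Fin (d + 1)) ℚ_[p]).mulVec
      ((g⁻¹ : GL' p d).val.mulVec w) = w
  rw [Matrix.mulVec_mulVec, Units.mul_inv, Matrix.one_mulVec]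

lemma IsLattice.map {L : Submodule ℤ_[p] (Vsp p d)} (hL : IsLattice p d L) (g : GL' p d) :
    IsLattice p d (Submodule.map (glMap p d g) L) := by
  constructor
  · exact hL.1.map _
  · have h1 : (Submodule.map (glMap p d g) L : Set (Vsp p d)) = glMap p d g '' L :=
      Submodule.map_coe _ _
    have h2 : ⇑(glMap p d g) = ⇑(Matrix.mulVecLin (g : Matrix _ _ _)) := rfl
    rw [h1, h2, Submodule.span_image, hL.2, Submodule.map_top, LinearMap.range_eq_top]
    exact glMap_surjective p d g

lemma glMap_scalar_comm (g : GL' p d) (c : ℚ_[p]) :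
    (glMap p d g).comp (scalarMap p d c) = (scalarMap p d c).comp (glMap p d g) := by
  refine LinearMap.ext fun v => ?_
  show (g : Matrix (Fin (d + 1)) (Fin (d + 1)) ℚ_[p]).mulVec (c • v)
      = c • (g : Matrix (Fin (d + 1)) (Fin (d + 1)) ℚ_[p]).mulVec v
  rw [Matrix.mulVec_smul]

/-- The action of `GL_{d+1}(ℚ_p)` on lattices. -/
def latAct (g : GL' p d) (L : LatZ p d) : LatZ p d :=
  ⟨Submodule.map (glMap p d g) L.1, IsLattice.map p d L.2 g⟩

/-- The action of `GL_{d+1}(ℚ_p)` on the vertices of the Bruhat–Tits building. -/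
def vAct (g : GL' p d) : Vtx p d → Vtx p d :=
  Quotient.map (latAct p d g) (by
    rintro L L' ⟨c, hc⟩
    refine ⟨c, ?_⟩
    show Submodule.map (scalarMap p d (c : ℚ_[p])) (Submodule.map (glMap p d g) L.1)
        = Submodule.map (glMap p d g) L'.1
    rw [← Submodule.map_comp, ← glMap_scalar_comm, Submodule.map_comp, hc])

/-- The standard lattice `ℤ_p^{d+1} ⊆ ℚ_p^{d+1}`. -/
def L0 : Submodule ℤ_[p] (Vsp p d) :=
  Submodule.span ℤ_[p] (Set.range fun i : Fin (d + 1) => Pi.single i (1 : ℚ_[p]))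

lemma isLattice_L0 : IsLattice p d (L0 p d) := by
  constructor
  · exact Submodule.fg_span (Set.finite_range _)
  · have hb : Submodule.span ℚ_[p]
        (Set.range fun i : Fin (d + 1) => Pi.single i (1 : ℚ_[p])) = ⊤ := by
      have hsp := Module.Basis.span_eq (Pi.basisFun ℚ_[p] (Fin (d + 1)))
      have hr : ⇑(Pi.basisFun ℚ_[p] (Fin (d + 1)))
          = fun i : Fin (d + 1) => Pi.single i (1 : ℚ_[p]) := by
        funext i
        exact Pi.basisFun_apply ℚ_[p] (Fin (d + 1)) i
      rwa [hr] at hsp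
    refine le_antisymm le_top ?_
    rw [← hb]
    exact Submodule.span_mono (fun x hx => Submodule.subset_span hx)

/-- The origin `x_0 = [ℤ_p^{d+1}]` of the Bruhat–Tits building. -/
def x0 : Vtx p d := Quotient.mk _ ⟨L0 p d, isLattice_L0 p d⟩

/-- The diagonal element `φ_k = diag(1, …, 1, p, …, p)` with `k` entries equal to `1`. -/
def phiDiag (k : ℕ) : GL' p d where
  val := Matrix.diagonal fun j : Fin (d + 1) => if (j : ℕ) < k then 1 else (p : ℚ_[p])
  inv := Matrix.diagonal fun j : Fin (d + 1) => if (j : ℕ) < k then 1 else (p : ℚ_[p])⁻¹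
  val_inv := by
    have hp : (p : ℚ_[p]) ≠ 0 :=
      Nat.cast_ne_zero.mpr (Fact.out (p := Nat.Prime p)).ne_zero
    rw [Matrix.diagonal_mul_diagonal]
    have h1 : (fun j : Fin (d + 1) =>
        (if (j : ℕ) < k then 1 else (p : ℚ_[p])) * (if (j : ℕ) < k then 1 else (p : ℚ_[p])⁻¹))
        = fun _ => 1 := by
      funext j
      by_cases h : (j : ℕ) < k <;> simp [h, mul_inv_cancel₀ hp]
    rw [h1, Matrix.diagonal_one]
  inv_val := by
    have hp : (p : ℚ_[p]) ≠ 0 :=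
      Nat.cast_ne_zero.mpr (Fact.out (p := Nat.Prime p)).ne_zero
    rw [Matrix.diagonal_mul_diagonal]
    have h1 : (fun j : Fin (d + 1) =>
        (if (j : ℕ) < k then 1 else (p : ℚ_[p])⁻¹) * (if (j : ℕ) < k then 1 else (p : ℚ_[p])))
        = fun _ => 1 := by
      funext j
      by_cases h : (j : ℕ) < k <;> simp [h, inv_mul_cancel₀ hp]
    rw [h1, Matrix.diagonal_one]

/-- The vertex `x_i := φ_i · x_0` for `1 ≤ i ≤ d`. -/
def xVtx (i : Fin d) : Vtx p d := vAct p d (phiDiag p d ((i : ℕ) + 1)) (x0 p d)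

/-- The `q`-simplex `η_J = {x_0, x_{j_1}, …, x_{j_q}}` for `J ⊆ {1, …, d}`. -/
def etaJ (J : Finset (Fin d)) : Finset (Vtx p d) :=
  insert (x0 p d) (J.image (xVtx p d))

/-- The Borel subgroup `P` of lower triangular matrices in `GL_{d+1}(ℚ_p)`, as a set. -/
def Pset : Set (GL' p d) :=
  {g | ∀ i j : Fin (d + 1), i < j → (g : Matrix (Fin (d + 1)) (Fin (d + 1)) ℚ_[p]) i j = 0}

/-- The unipotent radical `N` of `P`: lower unitriangular matrices, as a set. -/
def Nset : Set (GL' p d) :=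
  {g | (∀ i : Fin (d + 1), (g : Matrix (Fin (d + 1)) (Fin (d + 1)) ℚ_[p]) i i = 1) ∧
    ∀ i j : Fin (d + 1), i < j → (g : Matrix (Fin (d + 1)) (Fin (d + 1)) ℚ_[p]) i j = 0}

/-- The diagonal torus `T`, as a set. -/
def Tset : Set (GL' p d) :=
  {t | ∀ i j : Fin (d + 1), i ≠ j → (t : Matrix (Fin (d + 1)) (Fin (d + 1)) ℚ_[p]) i j = 0}

/-- The compact group `N_0` of lower unitriangular matrices with entries in `ℤ_p`,
as a set. -/
def N₀set : Set (GL' p d) :=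
  {g | g ∈ Nset p d ∧
    ∀ i j : Fin (d + 1), ‖(g : Matrix (Fin (d + 1)) (Fin (d + 1)) ℚ_[p]) i j‖ ≤ 1}

/-- The group `T_0` of diagonal matrices in `GL_{d+1}(ℤ_p)`, as a set. -/
def T₀set : Set (GL' p d) :=
  {t | t ∈ Tset p d ∧
    ∀ i : Fin (d + 1), ‖(t : Matrix (Fin (d + 1)) (Fin (d + 1)) ℚ_[p]) i i‖ = 1}

/-- The set `P_0 = T_0 · N_0`. -/
def P₀set : Set (GL' p d) := T₀set p d * N₀set p d

/-- The centre `Z ≅ ℚ_p^×` of `GL_{d+1}(ℚ_p)` (the invertible scalar matrices),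
as a set. -/
def Zset : Set (GL' p d) :=
  {z | ∃ c : ℚ_[p]ˣ,
    (z : Matrix (Fin (d + 1)) (Fin (d + 1)) ℚ_[p]) = (c : ℚ_[p]) • (1 : Matrix _ _ _)}

/-- The dominant submonoid `T_+ = {t ∈ T ∣ tN_0t⁻¹ ⊆ N_0}`, as a set. -/
def Tplusset : Set (GL' p d) :=
  {t | t ∈ Tset p d ∧ ∀ n ∈ N₀set p d, t * n * t⁻¹ ∈ N₀set p d}

/-- The monoid `P_+ = N_0 · T_+`, as a set. -/
def Pplusset : Set (GL' p d) := N₀set p d * Tplusset p d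

/-- Coordinate description of the standard lattice. -/
lemma mem_L0_iff (v : Vsp p d) : v ∈ L0 p d ↔ ∀ i, ‖v i‖ ≤ 1 := by
  constructor
  · intro hv
    refine Submodule.span_induction ?_ ?_ ?_ ?_ hv
    · rintro x ⟨i, rfl⟩ j
      by_cases hij : j = i
      · subst hij; simp
      · simp [Pi.single_eq_of_ne hij]
    · intro i; simp
    · intro x y _ _ hx hy i
      exact (Padic.nonarchimedean _ _).trans (max_le (hx i) (hy i))
    · intro a x _ hx i
      have h1 : (a • x) i = (a : ℚ_[p]) * x i := rfl
      rw [h1, norm_mul]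
      exact mul_le_one₀ a.norm_le_one (norm_nonneg _) (hx i)
  · intro hv
    let u : Fin (d + 1) → ℤ_[p] := fun i => ⟨v i, hv i⟩
    have h1 : v = ∑ i, u i • (Pi.single i (1 : ℚ_[p]) : Vsp p d) := by
      funext j
      rw [Finset.sum_apply, Finset.sum_eq_single j]
      · show v j = v j * (Pi.single j (1 : ℚ_[p]) : Vsp p d) j
        simp
      · intro i _ hij
        show v i * (Pi.single i (1 : ℚ_[p]) : Vsp p d) j = 0
        simp [Pi.single_eq_of_ne hij.symm]
      · simp
    rw [h1]
    exact Submodule.sum_mem _ fun i _ =>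
      Submodule.smul_mem _ _ (Submodule.subset_span ⟨i, rfl⟩)

lemma vAct_eq (g h : GL' p d) (H : vAct p d g (x0 p d) = vAct p d h (x0 p d)) :
    ∃ c : ℚ_[p]ˣ,
      (∀ v : Vsp p d, (∀ i, ‖v i‖ ≤ 1) → ∃ w : Vsp p d, (∀ i, ‖w i‖ ≤ 1) ∧
        (c : ℚ_[p]) • g.val.mulVec v = h.val.mulVec w) ∧
      (∀ w : Vsp p d, (∀ i, ‖w i‖ ≤ 1) → ∃ v : Vsp p d, (∀ i, ‖v i‖ ≤ 1) ∧
        (c : ℚ_[p]) • g.val.mulVec v = h.val.mulVec w) := by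
  obtain ⟨c, hc⟩ := Quotient.exact H
  change Submodule.map (scalarMap p d (c : ℚ_[p])) (Submodule.map (glMap p d g) (L0 p d))
    = Submodule.map (glMap p d h) (L0 p d) at hc
  refine ⟨c, ?_, ?_⟩
  · intro v hv
    have h1 : (c : ℚ_[p]) • g.val.mulVec v ∈ Submodule.map (glMap p d h) (L0 p d) := by
      rw [← hc]
      exact ⟨_, ⟨v, (mem_L0_iff p d v).2 hv, rfl⟩, rfl⟩
    obtain ⟨w, hw, hw2⟩ := h1
    exact ⟨w, (mem_L0_iff p d w).1 hw, hw2.symm⟩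
  · intro w hw
    have h1 : h.val.mulVec w ∈ Submodule.map (scalarMap p d (c : ℚ_[p]))
        (Submodule.map (glMap p d g) (L0 p d)) := by
      rw [hc]
      exact ⟨w, (mem_L0_iff p d w).2 hw, rfl⟩
    obtain ⟨_, ⟨v, hv, rfl⟩, hv2⟩ := h1
    exact ⟨v, (mem_L0_iff p d v).1 hv, hv2⟩

lemma vAct_mul (g h : GL' p d) (x : Vtx p d) :
    vAct p d (g * h) x = vAct p d g (vAct p d h x) := by
  induction x using Quotient.inductionOn with
  | _ L =>
    apply congrArg (Quotient.mk (latSetoid p d))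
    apply Subtype.ext
    show Submodule.map (glMap p d (g * h)) L.1
      = Submodule.map (glMap p d g) (Submodule.map (glMap p d h) L.1)
    rw [← Submodule.map_comp]
    congr 1
    refine LinearMap.ext fun v => ?_
    show (g * h).val.mulVec v = g.val.mulVec (h.val.mulVec v)
    rw [Matrix.mulVec_mulVec, Units.val_mul]

/-- Uniform notation for the vertices, including `k = 0`. -/
def Xv (k : ℕ) : Vtx p d := vAct p d (phiDiag p d k) (x0 p d)

lemma p_ne_zero' : (p : ℚ_[p]) ≠ 0 :=
  Nat.cast_ne_zero.mpr (Fact.out (p := Nat.Prime p)).ne_zero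

lemma Xv_zero : Xv p d 0 = x0 p d := by
  symm
  apply Quotient.sound
  refine ⟨Units.mk0 (p : ℚ_[p]) (p_ne_zero' p), ?_⟩
  show Submodule.map (scalarMap p d (p : ℚ_[p])) (L0 p d)
    = Submodule.map (glMap p d (phiDiag p d 0)) (L0 p d)
  congr 1
  refine LinearMap.ext fun v => ?_
  show (p : ℚ_[p]) • v = (phiDiag p d 0).val.mulVec v
  funext i
  simp [phiDiag, Matrix.mulVec_diagonal]

/-- Norms of the diagonal entries of `φ_k`. -/
def av (k i : ℕ) : ℝ := if i < k then 1 else (p : ℝ)⁻¹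

lemma av_pos (k i : ℕ) : 0 < av p k i := by
  have : 0 < (p : ℝ) := Nat.cast_pos.mpr (Fact.out (p := Nat.Prime p)).pos
  unfold av; split_ifs <;> positivity

/-- Diagonal entries of `φ_k`. -/
def ph (k i : ℕ) : ℚ_[p] := if i < k then 1 else p

lemma norm_ph (k i : ℕ) : ‖ph p k i‖ = av p k i := by
  unfold ph av; split_ifs <;> simp

lemma phi_val (k : ℕ) : (phiDiag p d k).val = Matrix.diagonal fun j : Fin (d + 1) => ph p k (j : ℕ) := rfl

lemma tri_eq (b : GL' p d) (hb : b ∈ Pset p d) (v : Vsp p d) (i : Fin (d + 1))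
    (hv : ∀ j < i, v j = 0) : b.val.mulVec v i = b.val i i * v i := by
  rw [Matrix.mulVec, dotProduct, Finset.sum_eq_single i]
  · intro j _ hj
    rcases lt_or_gt_of_ne hj with h | h
    · rw [hv j h, mul_zero]
    · rw [hb i j h, zero_mul]
  · simp

lemma diag_ne (b : GL' p d) (hb : b ∈ Pset p d) (i : Fin (d + 1)) : b.val i i ≠ 0 := by
  have h1 : b.val.det = ∏ i, b.val i i := by
    apply Matrix.det_of_isLowerTriangular
    intro i j hij
    exact hb i j (by simpa using hij)
  have h2 : b.val.det ≠ 0 := ((Matrix.isUnit_iff_isUnit_det _).1 b.isUnit).ne_zero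
  rw [h1] at h2
  exact Finset.prod_ne_zero_iff.1 h2 i (Finset.mem_univ i)

lemma key (b : GL' p d) (hb : b ∈ Pset p d) (j k : ℕ)
    (H : vAct p d b (Xv p d j) = Xv p d k) :
    ∃ r : ℝ, 0 < r ∧ (∀ i : Fin (d + 1), ‖b.val i i‖ * av p j i = r * av p k i) ∧
      ∀ i l : Fin (d + 1), ‖b.val i l‖ * av p j l ≤ r * av p k i := by
  rw [Xv, ← vAct_mul] at H
  obtain ⟨c, h1, h2⟩ := vAct_eq p d _ _ H
  have hc : 0 < ‖(c : ℚ_[p])‖ := norm_pos_iff.2 c.ne_zero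
  have hg : b * phiDiag p d j ∈ Pset p d := by
    intro i l hil
    rw [Units.val_mul, phi_val, Matrix.mul_diagonal, hb i l hil, zero_mul]
  have hge : ∀ i l, (b * phiDiag p d j).val i l = b.val i l * ph p j l := by
    intro i l
    rw [Units.val_mul, phi_val, Matrix.mul_diagonal]
  have single_int : ∀ l : Fin (d + 1), ∀ i, ‖(Pi.single l (1 : ℚ_[p]) : Vsp p d) i‖ ≤ 1 := by
    intro l
    exact (mem_L0_iff p d _).1 (Submodule.subset_span ⟨l, rfl⟩)
  have up : ∀ i l : Fin (d + 1), ‖b.val i l‖ * av p j l ≤ ‖(c : ℚ_[p])‖⁻¹ * av p k i := by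
    intro i l
    obtain ⟨w, hw, e⟩ := h1 (Pi.single l 1) (single_int l)
    have e1 := congrFun e i
    rw [phi_val, Matrix.mulVec_diagonal, Pi.smul_apply, Matrix.mulVec_single_one,
      Matrix.col_apply, hge, smul_eq_mul] at e1
    have e2 := congrArg norm e1
    rw [norm_mul, norm_mul, norm_mul, norm_ph, norm_ph] at e2
    rw [le_inv_mul_iff₀ hc, e2]
    exact mul_le_of_le_one_right (av_pos p k i).le (hw i)
  refine ⟨‖(c : ℚ_[p])‖⁻¹, inv_pos.2 hc, fun i => le_antisymm (up i i) ?_, up⟩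
  obtain ⟨v, hv, e⟩ := h2 (Pi.single i 1) (single_int i)
  have hz : ∀ n : ℕ, ∀ m : Fin (d + 1), (m : ℕ) = n → m < i → v m = 0 := by
    intro n
    induction n using Nat.strong_induction_on with
    | _ n ih =>
      intro m hm hmi
      have e1 := congrFun e m
      rw [phi_val, Matrix.mulVec_diagonal, Pi.smul_apply, Pi.single_eq_of_ne hmi.ne, mul_zero,
        tri_eq p d _ hg v m (fun q hq => ih q (by rw [← hm]; exact hq) q rfl (hq.trans hmi)),
        smul_eq_mul] at e1
      rcases mul_eq_zero.1 e1 with h | h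
      · exact absurd h c.ne_zero
      · exact (mul_eq_zero.1 h).resolve_left (diag_ne p d _ hg m)
  have e1 := congrFun e i
  rw [phi_val, Matrix.mulVec_diagonal, Pi.smul_apply, Pi.single_eq_same, mul_one,
    tri_eq p d _ hg v i (fun q hq => hz q q rfl hq), smul_eq_mul, hge] at e1
  have e2 := congrArg norm e1
  rw [norm_mul, norm_mul, norm_mul, norm_ph, norm_ph] at e2
  rw [inv_mul_le_iff₀ hc, ← e2]
  refine mul_le_mul_of_nonneg_left ?_ hc.le
  exact mul_le_of_le_one_right (mul_nonneg (norm_nonneg _) (av_pos p j i).le) (hv i)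

/-- Invertible diagonal matrix. -/
def Dg (f : Fin (d + 1) → ℚ_[p]) (hf : ∀ i, f i ≠ 0) : GL' p d where
  val := Matrix.diagonal f
  inv := Matrix.diagonal fun i => (f i)⁻¹
  val_inv := by
    rw [Matrix.diagonal_mul_diagonal]
    simp [hf]
  inv_val := by
    rw [Matrix.diagonal_mul_diagonal]
    simp [hf]

lemma mem_P0Z (b : GL' p d) (hb : b ∈ Pset p d) (r : ℝ) (hr : 0 < r)
    (h1 : ∀ i, ‖b.val i i‖ = r) (h2 : ∀ i l, ‖b.val i l‖ ≤ r) :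
    b ∈ P₀set p d * Zset p d := by
  have hn := diag_ne p d b hb
  refine ⟨Dg p d (fun i => b.val i i * (b.val 0 0)⁻¹)
      (fun i => mul_ne_zero (hn i) (inv_ne_zero (hn 0))) *
    (Dg p d (fun i => (b.val i i)⁻¹) (fun i => inv_ne_zero (hn i)) * b), ⟨_, ?_, _, ?_, rfl⟩,
    Dg p d (fun _ => b.val 0 0) (fun _ => hn 0), ?_, ?_⟩
  · refine ⟨fun i j hij => ?_, fun i => ?_⟩
    · simp [Dg, hij]
    · simp [Dg, h1, hr.ne']
  · refine ⟨⟨fun i => ?_, fun i j hij => ?_⟩, fun i j => ?_⟩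
    · simp [Dg, hn i]
    · simp [Dg, hb i j hij]
    · simp only [Dg, Units.val_mul, Matrix.diagonal_mul, norm_mul, norm_inv, h1]
      rw [inv_mul_le_iff₀ hr, mul_one]
      exact h2 i j
  · refine ⟨Units.mk0 _ (hn 0), ?_⟩
    simp [Dg, Matrix.smul_one_eq_diagonal]
  · apply Units.ext
    ext i j
    have := hn i
    have := hn 0
    simp only [Dg, Units.val_mul, Matrix.diagonal_mul, Matrix.mul_diagonal]
    field_simp

lemma mem_eta (J : Finset (Fin d)) (x : Vtx p d) :
    x ∈ etaJ p d J ↔ ∃ k : ℕ, k ≤ d ∧ (k = 0 ∨ ∃ i ∈ J, (i : ℕ) + 1 = k) ∧ x = Xv p d k := by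
  rw [etaJ, Finset.mem_insert, Finset.mem_image]
  constructor
  · rintro (rfl | ⟨i, hi, rfl⟩)
    · exact ⟨0, Nat.zero_le _, Or.inl rfl, (Xv_zero p d).symm⟩
    · exact ⟨i + 1, i.2, Or.inr ⟨i, hi, rfl⟩, rfl⟩
  · rintro ⟨k, _, rfl | ⟨i, hi, rfl⟩, rfl⟩
    · exact Or.inl (Xv_zero p d)
    · exact Or.inr ⟨i, hi, rfl⟩

/-- If `b ∈ P` and `J_1, J_2 ⊆ {1, …, d}` are subsets of equal
cardinality with `b · η_{J_1} = η_{J_2}` as simplices of the Bruhat–Tits building, then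
`J_1 = J_2` and `b ∈ P_0Z`.  In particular, for distinct subsets `J` the simplices `η_J`
lie in distinct `P`-orbits, and the stabilizer of `η_J` in `P` is contained in
`P_0Z`. -/
theorem stmt14 (p d : ℕ) [Fact (Nat.Prime p)] (hd : 1 ≤ d)
    (b : GL' p d) (hb : b ∈ Pset p d)
    (J1 J2 : Finset (Fin d)) (hcard : J1.card = J2.card)
    (h : Finset.image (vAct p d b) (etaJ p d J1) = etaJ p d J2) :
    J1 = J2 ∧ b ∈ P₀set p d * Zset p d := by
  have hp1 : (1 : ℝ) < p := by exact_mod_cast (Fact.out (p := Nat.Prime p)).one_lt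
  have hq0 : (0 : ℝ) < (p : ℝ)⁻¹ := by positivity
  have hq1 : (p : ℝ)⁻¹ < 1 := inv_lt_one_of_one_lt₀ hp1
  set q : ℝ := (p : ℝ)⁻¹ with hq
  have avlt : ∀ k i : ℕ, i < k → av p k i = 1 := fun k i hh => by simp [av, hh]
  have avge : ∀ k i : ℕ, k ≤ i → av p k i = q := fun k i hh => by simp [av, hh, hq]
  -- forward and backward correspondence on indices
  have fwd : ∀ j : ℕ, j ≤ d → (j = 0 ∨ ∃ i ∈ J1, (i : ℕ) + 1 = j) →
      ∃ k : ℕ, k ≤ d ∧ (k = 0 ∨ ∃ i ∈ J2, (i : ℕ) + 1 = k) ∧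
        vAct p d b (Xv p d j) = Xv p d k := by
    intro j hj hj'
    apply (mem_eta p d J2 _).1
    rw [← h]
    exact Finset.mem_image_of_mem _ ((mem_eta p d J1 _).2 ⟨j, hj, hj', rfl⟩)
  have bwd : ∀ k : ℕ, k ≤ d → (k = 0 ∨ ∃ i ∈ J2, (i : ℕ) + 1 = k) →
      ∃ j : ℕ, j ≤ d ∧ (j = 0 ∨ ∃ i ∈ J1, (i : ℕ) + 1 = j) ∧
        vAct p d b (Xv p d j) = Xv p d k := by
    intro k hk hk'
    have h1 : Xv p d k ∈ etaJ p d J2 := (mem_eta p d J2 _).2 ⟨k, hk, hk', rfl⟩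
    rw [← h, Finset.mem_image] at h1
    obtain ⟨x, hx, hx2⟩ := h1
    obtain ⟨j, hj, hj', rfl⟩ := (mem_eta p d J1 _).1 hx
    exact ⟨j, hj, hj', hx2⟩
  obtain ⟨k, hk, -, Hk⟩ := fwd 0 (Nat.zero_le _) (Or.inl rfl)
  obtain ⟨j, hj, -, Hj⟩ := bwd 0 (Nat.zero_le _) (Or.inl rfl)
  obtain ⟨r, hr, hr1, hr2⟩ := key p d b hb 0 k Hk
  obtain ⟨s, hs, hs1, -⟩ := key p d b hb j 0 Hj
  have hk0 : k = 0 := by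
    by_contra hne
    have a1 := hr1 0
    have a2 := hr1 (Fin.last d)
    have a3 := hs1 0
    have a4 := hs1 (Fin.last d)
    simp only [Fin.val_zero, Fin.val_last] at a1 a2 a3 a4
    rw [avge 0 0 le_rfl, avlt k 0 (Nat.pos_of_ne_zero hne)] at a1
    rw [avge 0 d (Nat.zero_le _), avge k d hk] at a2
    rw [avge 0 0 le_rfl] at a3
    rw [avge 0 d (Nat.zero_le _), avge j d hj] at a4
    have b2 := mul_right_cancel₀ hq0.ne' a2
    have b4 := mul_right_cancel₀ hq0.ne' a4
    have hrs : s = r := b4.symm.trans b2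
    subst hrs
    have b3 : av p j 0 = q * q := by
      have e : s * av p j 0 = s * (q * q) := by
        calc s * av p j 0 = (‖b.val 0 0‖ * av p j 0) * q := by
              rw [← mul_one s, ← a1]; ring
          _ = s * (q * q) := by rw [a3]; ring
      exact mul_left_cancel₀ hs.ne' e
    rcases Nat.eq_zero_or_pos j with h0 | h0
    · rw [h0, avge 0 0 le_rfl] at b3
      nlinarith
    · rw [avlt j 0 h0] at b3
      nlinarith
  subst hk0
  have hB : ∀ i, ‖b.val i i‖ = r := fun i =>
    mul_right_cancel₀ (av_pos p 0 i).ne' (hr1 i)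
  have same : ∀ j k : ℕ, j ≤ d → k ≤ d → vAct p d b (Xv p d j) = Xv p d k → j = k := by
    intro j k hj hk H
    obtain ⟨s, hs, hs1, -⟩ := key p d b hb j k H
    have a4 := hs1 (Fin.last d)
    simp only [Fin.val_last, hB] at a4
    rw [avge j d hj, avge k d hk] at a4
    have b4 := mul_right_cancel₀ hq0.ne' a4
    subst b4
    have hav : ∀ i : ℕ, i ≤ d → av p j i = av p k i := by
      intro i hi
      have := hs1 ⟨i, Nat.lt_succ_of_le hi⟩
      rw [hB] at this
      exact mul_left_cancel₀ hs.ne' this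
    rcases lt_trichotomy j k with hlt | heq | hlt
    · have := hav j hj
      rw [avge j j le_rfl, avlt k j hlt] at this
      exact absurd this hq1.ne
    · exact heq
    · have := hav k hk
      rw [avge k k le_rfl, avlt j k hlt] at this
      exact absurd this.symm hq1.ne
  refine ⟨?_, mem_P0Z p d b hb r hr hB ?_⟩
  · apply Finset.eq_of_subset_of_card_le _ hcard.ge
    intro i hi
    obtain ⟨k, hk, hk', H⟩ := fwd (i + 1) i.2 (Or.inr ⟨i, hi, rfl⟩)
    have e := same _ _ i.2 hk H
    rcases hk' with h0 | ⟨i', hi', h0⟩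
    · omega
    · have : i' = i := Fin.ext (by omega)
      exact this ▸ hi'
  · intro i l
    have := hr2 i l
    rw [avge 0 _ (Nat.zero_le _), avge 0 _ (Nat.zero_le _)] at this
    exact le_of_mul_le_mul_right this hq0
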